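/- arXiv:1405.4688 — 2 statements merged into one kernel-verified Lean document; each statement's English description precedes it below -/
import Mathlib

section
/- Let 0 < p ≤ 1. The map G̃(A, B) = (p+1) ∫₀¹ (λA + (1-λ)B)^p dλ is jointly concave on pairs of n×n positive definite complex matrices (in the Loewner order), and for positive real scalars s ≠ t (i.e., 1×1 matrices) it satisfies G̃(s, t) = (t^{p+1} − s^{p+1})/(t − s), while G̃(t, t) = (p+1)t^p. Thus the function G(s,t) = (t^{p+1}−s^{p+1})/(t−s) for s ≠ t, G(t,t) = (p+1)t^p, extends to a jointly concave map on pairs of positive definite matrices. -/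
open Matrix MeasureTheory
open scoped ComplexOrder

attribute [local instance] Matrix.normedAddCommGroup Matrix.normedSpace

/-- Matrix power by a real exponent via the functional calculus
(unitary diagonalization for Hermitian matrices; junk value otherwise). -/
noncomputable def mpow {n : ℕ} (A : Matrix (Fin n) (Fin n) ℂ) (q : ℝ) :
    Matrix (Fin n) (Fin n) ℂ :=
  if hA : A.IsHermitian then
    (hA.eigenvectorUnitary : Matrix (Fin n) (Fin n) ℂ) *
      Matrix.diagonal (fun i => ((hA.eigenvalues i ^ q : ℝ) : ℂ)) *
      (star (hA.eigenvectorUnitary : Matrix (Fin n) (Fin n) ℂ))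
  else 0

/-- `G̃(A,B) = (p+1) ∫₀¹ (λA + (1-λ)B)^p dλ`. -/
noncomputable def Gmap {n : ℕ} (p : ℝ) (A B : Matrix (Fin n) (Fin n) ℂ) :
    Matrix (Fin n) (Fin n) ℂ :=
  (p + 1) • ∫ l in Set.Icc (0 : ℝ) 1, mpow (l • A + (1 - l) • B) p

open Set in
lemma abs_cont {A : Type*} [CStarAlgebra A] [PartialOrder A] [StarOrderedRing A] (p : ℝ) :
    ContinuousOn (fun a : A => cfc (fun x : ℝ => x ^ p) a) {a : A | IsStrictlyPositive a} := by
  refine (CFC.continuousOn_rpow p).congr ?_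
  intro a ha
  exact (CFC.rpow_eq_cfc_real ha.nonneg).symm

open Set in
lemma abs_concave {A : Type*} [CStarAlgebra A] [PartialOrder A] [StarOrderedRing A] {p : ℝ}
    (hp : p ∈ Icc (0 : ℝ) 1) :
    ConcaveOn ℝ (Ici (0 : A)) (fun a : A => cfc (fun x : ℝ => x ^ p) a) := by
  refine (CFC.concaveOn_rpow hp).congr ?_
  intro a ha
  exact CFC.rpow_eq_cfc_real ha

lemma mpow_eq_cfc {n : ℕ} {A : Matrix (Fin n) (Fin n) ℂ} (hA : A.IsHermitian) (p : ℝ) :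
    mpow A p = cfc (fun x : ℝ => x ^ p) A := by
  rw [hA.cfc_eq, mpow, dif_pos hA, Matrix.IsHermitian.cfc, Unitary.conjStarAlgAut_apply]
  rfl

lemma posDef_isClosed {n : ℕ} :
    IsClosed {M : Matrix (Fin n) (Fin n) ℂ | M.PosSemidef} := by
  have h := @CStarAlgebra.isClosed_nonneg (Matrix (Fin n) (Fin n) ℂ)
    (@CStarAlgebra.toNonUnitalCStarAlgebra _ Matrix.instCStarAlgebra) Matrix.instPartialOrder
    Matrix.instStarOrderedRing
  simpa only [Matrix.nonneg_iff_posSemidef] using h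

lemma mpow_cont {n : ℕ} (p : ℝ) :
    ContinuousOn (fun M : Matrix (Fin n) (Fin n) ℂ => mpow M p) {M | M.PosDef} := by
  have h := @abs_cont (Matrix (Fin n) (Fin n) ℂ) Matrix.instCStarAlgebra Matrix.instPartialOrder
    Matrix.instStarOrderedRing p
  have e : {M : Matrix (Fin n) (Fin n) ℂ | M.PosDef} =
      {a | @IsStrictlyPositive _ Matrix.instPartialOrder.toLE _ _ a} := by
    ext M; exact Matrix.isStrictlyPositive_iff_posDef.symm
  rw [← e] at h
  exact h.congr fun M hM => mpow_eq_cfc hM.1 p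

lemma mpow_concave {n : ℕ} {p : ℝ} (h0 : 0 ≤ p) (h1 : p ≤ 1)
    {A B : Matrix (Fin n) (Fin n) ℂ} (hA : A.PosDef) (hB : B.PosDef)
    {α : ℝ} (ha : 0 ≤ α) (ha1 : α ≤ 1) (hC : (α • A + (1 - α) • B).PosDef) :
    (mpow (α • A + (1 - α) • B) p - (α • mpow A p + (1 - α) • mpow B p)).PosSemidef := by
  have h := @abs_concave (Matrix (Fin n) (Fin n) ℂ) Matrix.instCStarAlgebra
    Matrix.instPartialOrder Matrix.instStarOrderedRing p ⟨h0, h1⟩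
  rw [mpow_eq_cfc hA.1, mpow_eq_cfc hB.1, mpow_eq_cfc hC.1]
  exact h.2 (Matrix.nonneg_iff_posSemidef.2 hA.posSemidef)
    (Matrix.nonneg_iff_posSemidef.2 hB.posSemidef) ha (sub_nonneg.2 ha1) (by ring)

lemma posDef_comb {n : ℕ} {A B : Matrix (Fin n) (Fin n) ℂ} (hA : A.PosDef) (hB : B.PosDef)
    {α : ℝ} (ha : 0 ≤ α) (ha1 : α ≤ 1) : (α • A + (1 - α) • B).PosDef := by
  rcases ha.eq_or_lt with rfl | h
  · simpa using hB
  · exact (hA.smul h).add_posSemidef (hB.posSemidef.smul (sub_nonneg.2 ha1))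

lemma mpow_cont_line {n : ℕ} (p : ℝ) {A B : Matrix (Fin n) (Fin n) ℂ}
    (hA : A.PosDef) (hB : B.PosDef) :
    ContinuousOn (fun l : ℝ => mpow (l • A + (1 - l) • B) p) (Set.Icc 0 1) := by
  refine (mpow_cont p).comp (by fun_prop) ?_
  intro l hl
  exact posDef_comb hA hB hl.1 hl.2

lemma integral_comb_mem {E : Type*} [NormedAddCommGroup E] [NormedSpace ℝ E] [CompleteSpace E]
    {S : Set E} (hS : Convex ℝ S) (hc : IsClosed S) {f g h : ℝ → E} {α : ℝ}
    (hf : ContinuousOn f (Set.Icc 0 1)) (hg : ContinuousOn g (Set.Icc 0 1))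
    (hh : ContinuousOn h (Set.Icc 0 1))
    (hm : ∀ l ∈ Set.Icc (0 : ℝ) 1, f l - (α • g l + (1 - α) • h l) ∈ S) :
    (∫ l in Set.Icc (0 : ℝ) 1, f l) - (α • (∫ l in Set.Icc (0 : ℝ) 1, g l) +
      (1 - α) • ∫ l in Set.Icc (0 : ℝ) 1, h l) ∈ S := by
  have i : Integrable f (volume.restrict (Set.Icc (0 : ℝ) 1)) :=
    hf.integrableOn_compact isCompact_Icc
  have i1 : Integrable g (volume.restrict (Set.Icc (0 : ℝ) 1)) :=
    hg.integrableOn_compact isCompact_Icc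
  have i2 : Integrable h (volume.restrict (Set.Icc (0 : ℝ) 1)) :=
    hh.integrableOn_compact isCompact_Icc
  have j1 : Integrable (fun l => α • g l) (volume.restrict (Set.Icc (0 : ℝ) 1)) := i1.smul α
  have j2 : Integrable (fun l => (1 - α) • h l) (volume.restrict (Set.Icc (0 : ℝ) 1)) :=
    i2.smul (1 - α)
  have j3 : Integrable (fun l => α • g l + (1 - α) • h l)
    (volume.restrict (Set.Icc (0 : ℝ) 1)) := j1.add j2
  rw [← integral_smul, ← integral_smul, ← integral_add j1 j2, ← integral_sub i j3]
  haveI : IsProbabilityMeasure (volume.restrict (Set.Icc (0 : ℝ) 1)) := ⟨by simp⟩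
  exact hS.integral_mem hc
    ((ae_restrict_iff' measurableSet_Icc).2 (Filter.Eventually.of_forall hm)) (i.sub j3)

lemma mpow_scalar (p c : ℝ) :
    mpow (c • (1 : Matrix (Fin 1) (Fin 1) ℂ)) p = (c ^ p) • 1 := by
  have hH : (c • (1 : Matrix (Fin 1) (Fin 1) ℂ)).IsHermitian := by
    rw [Matrix.IsHermitian, Matrix.conjTranspose_smul]; simp
  rw [mpow_eq_cfc hH, ← Algebra.algebraMap_eq_smul_one, cfc_algebraMap,
    Algebra.algebraMap_eq_smul_one]

lemma Gmap_scalar (p s t : ℝ) :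
    Gmap p (s • (1 : Matrix (Fin 1) (Fin 1) ℂ)) (t • 1) =
      ((p + 1) * ∫ l in (0 : ℝ)..1, ((s - t) * l + t) ^ p) • 1 := by
  have h : ∀ l : ℝ, mpow (l • s • (1 : Matrix (Fin 1) (Fin 1) ℂ) + (1 - l) • t • 1) p
      = (((s - t) * l + t) ^ p) • 1 := by
    intro l
    rw [← mpow_scalar, smul_smul, smul_smul, ← add_smul]
    congr 2; ring
  simp only [Gmap, h]
  rw [integral_smul_const, smul_smul, intervalIntegral.integral_of_le zero_le_one,
    integral_Icc_eq_integral_Ioc]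

theorem stmt1 (p : ℝ) (hp0 : 0 < p) (hp1 : p ≤ 1) :
    (∀ (n : ℕ) (A₁ A₂ B₁ B₂ : Matrix (Fin n) (Fin n) ℂ),
      A₁.PosDef → A₂.PosDef → B₁.PosDef → B₂.PosDef →
      ∀ α : ℝ, 0 ≤ α → α ≤ 1 →
      (Gmap p (α • A₁ + (1 - α) • A₂) (α • B₁ + (1 - α) • B₂) -
        (α • Gmap p A₁ B₁ + (1 - α) • Gmap p A₂ B₂)).PosSemidef) ∧
    (∀ s t : ℝ, 0 < s → 0 < t → s ≠ t →
      Gmap p (s • (1 : Matrix (Fin 1) (Fin 1) ℂ)) (t • 1) =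
        ((t ^ (p + 1) - s ^ (p + 1)) / (t - s)) • 1) ∧
    (∀ t : ℝ, 0 < t →
      Gmap p (t • (1 : Matrix (Fin 1) (Fin 1) ℂ)) (t • 1) = ((p + 1) * t ^ p) • 1) := by
  refine ⟨?_, ?_, ?_⟩
  · intro n A₁ A₂ B₁ B₂ hA₁ hA₂ hB₁ hB₂ α h0 h1
    have hA := posDef_comb hA₁ hA₂ h0 h1
    have hB := posDef_comb hB₁ hB₂ h0 h1
    have key := integral_comb_mem (S := {M : Matrix (Fin n) (Fin n) ℂ | M.PosSemidef})
      (α := α) (fun x hx y hy a b ha hb _ =>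
        (Matrix.PosSemidef.smul hx ha).add (Matrix.PosSemidef.smul hy hb))
      posDef_isClosed (mpow_cont_line p hA hB) (mpow_cont_line p hA₁ hB₁)
      (mpow_cont_line p hA₂ hB₂) (by
        intro l hl
        have e : l • (α • A₁ + (1 - α) • A₂) + (1 - l) • (α • B₁ + (1 - α) • B₂) =
            α • (l • A₁ + (1 - l) • B₁) + (1 - α) • (l • A₂ + (1 - l) • B₂) := by module
        have c1 := posDef_comb hA₁ hB₁ hl.1 hl.2
        have c2 := posDef_comb hA₂ hB₂ hl.1 hl.2
        rw [e]
        exact mpow_concave hp0.le hp1 c1 c2 h0 h1 (posDef_comb c1 c2 h0 h1))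
    have key2 := Matrix.PosSemidef.smul key (by linarith : (0 : ℝ) ≤ p + 1)
    convert key2 using 1
    simp only [Gmap]
    module
  · intro s t hs ht hst
    rw [Gmap_scalar]
    congr 1
    have h1 : s - t ≠ 0 := sub_ne_zero.2 hst
    have h2 : t - s ≠ 0 := sub_ne_zero.2 hst.symm
    have h3 : p + 1 ≠ 0 := by positivity
    rw [intervalIntegral.integral_comp_mul_add (fun x => x ^ p) h1,
      integral_rpow (Or.inl (by linarith))]
    simp only [mul_zero, zero_add, mul_one, sub_add_cancel, smul_eq_mul]
    field_simp
    ring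
  · intro t ht
    rw [Gmap_scalar]
    simp
end

section
/- Let 0 < p ≤ 1 and λ ∈ [0,1]. The perspective map (A, B) ↦ B^{1/2}(λ(B^{-1/2}AB^{-1/2})^p + (1-λ)I)^{1/p}B^{1/2} is jointly concave on pairs of n×n positive definite complex matrices: for positive definite A₁, A₂, B₁, B₂ and α ∈ [0,1], with A = αA₁+(1-α)A₂ and B = αB₁+(1-α)B₂, B^{1/2}(λ(B^{-1/2}AB^{-1/2})^p + (1-λ)I)^{1/p}B^{1/2} ≥ α B₁^{1/2}(λ(B₁^{-1/2}A₁B₁^{-1/2})^p + (1-λ)I)^{1/p}B₁^{1/2} + (1-α) B₂^{1/2}(λ(B₂^{-1/2}A₂B₂^{-1/2})^p + (1-λ)I)^{1/p}B₂^{1/2} in the Loewner order. -/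
open Matrix
open scoped ComplexOrder

/-- The perspective map
`(A,B) ↦ B^{1/2}(λ(B^{-1/2}AB^{-1/2})^p + (1-λ)I)^{1/p}B^{1/2}`. -/
noncomputable def persp2 {n : ℕ} (lam p : ℝ) (A B : Matrix (Fin n) (Fin n) ℂ) :
    Matrix (Fin n) (Fin n) ℂ :=
  mpow B (1 / 2) *
    mpow (lam • mpow (mpow B (-(1 / 2)) * A * mpow B (-(1 / 2))) p + (1 - lam) • 1)
      (1 / p) *
    mpow B (1 / 2)


namespace PerspAux
open scoped MatrixOrder
open MeasureTheory Filter Topology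

variable {n : ℕ}

lemma contOn (X : Matrix (Fin n) (Fin n) ℂ) (f : ℝ → ℝ) : ContinuousOn f (spectrum ℝ X) :=
  Matrix.finite_real_spectrum.continuousOn f

lemma mpow_eq {A : Matrix (Fin n) (Fin n) ℂ} (hA : A.IsHermitian) (q : ℝ) :
    mpow A q = cfc (fun x : ℝ => x ^ q) A := by
  rw [hA.cfc_eq, mpow, dif_pos hA, Matrix.IsHermitian.cfc, Unitary.conjStarAlgAut_apply]
  rfl

lemma spec_pos {X : Matrix (Fin n) (Fin n) ℂ} (hX : X.PosDef) {x : ℝ} (hx : x ∈ spectrum ℝ X) :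
    0 < x := by
  rw [hX.1.spectrum_real_eq_range_eigenvalues] at hx
  obtain ⟨i, rfl⟩ := hx
  exact hX.eigenvalues_pos i

lemma cfc_herm (f : ℝ → ℝ) (X : Matrix (Fin n) (Fin n) ℂ) : (cfc f X).IsHermitian :=
  cfc_predicate f X

lemma cfc_posDef {f : ℝ → ℝ} (hf : ∀ x, 0 < x → 0 < f x) {X : Matrix (Fin n) (Fin n) ℂ}
    (hX : X.PosDef) : (cfc f X).PosDef := by
  rw [(cfc_herm f X).posDef_iff_eigenvalues_pos]
  intro i
  have := (cfc_herm f X).eigenvalues_mem_spectrum_real i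
  rw [cfc_map_spectrum f X hX.1.isSelfAdjoint (contOn X f)] at this
  obtain ⟨x, hx, h⟩ := this
  rw [← h]
  exact hf x (spec_pos hX hx)

/-- quadratic form of the functional calculus -/
noncomputable def q (f : ℝ → ℝ) (X : Matrix (Fin n) (Fin n) ℂ) (v : Fin n → ℂ) : ℝ :=
  RCLike.re (star v ⬝ᵥ (cfc f X *ᵥ v))

lemma q_eq {X : Matrix (Fin n) (Fin n) ℂ} (hX : X.IsHermitian) (v : Fin n → ℂ) :
    ∃ w : Fin n → ℝ, ∀ f : ℝ → ℝ, q f X v = ∑ i, f (hX.eigenvalues i) * w i := by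
  refine ⟨fun i => ‖((star (hX.eigenvectorUnitary : Matrix (Fin n) (Fin n) ℂ)) *ᵥ v) i‖ ^ 2, ?_⟩
  intro f
  rw [q, hX.cfc_eq, Matrix.IsHermitian.cfc, Unitary.conjStarAlgAut_apply,
    ← Matrix.mulVec_mulVec, ← Matrix.mulVec_mulVec, Matrix.dotProduct_mulVec]
  have : star v ᵥ* (hX.eigenvectorUnitary : Matrix (Fin n) (Fin n) ℂ)
    = star ((star (hX.eigenvectorUnitary : Matrix (Fin n) (Fin n) ℂ)) *ᵥ v) := by
    rw [Matrix.star_mulVec, Matrix.star_eq_conjTranspose, Matrix.conjTranspose_conjTranspose]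
  rw [this]
  simp only [dotProduct, map_sum, Matrix.mulVec_diagonal]
  refine Finset.sum_congr rfl fun i _ => ?_
  set z := ((star (hX.eigenvectorUnitary : Matrix (Fin n) (Fin n) ℂ)) *ᵥ v) i
  simp only [Pi.star_apply, Function.comp_apply]
  change RCLike.re (star z * (((f (hX.eigenvalues i) : ℝ) : ℂ) * z)) = _
  have : star z * (((f (hX.eigenvalues i) : ℝ) : ℂ) * z)
     = ((f (hX.eigenvalues i) * ‖z‖ ^ 2 : ℝ) : ℂ) := by
    have := Complex.conj_mul' z
    push_cast
    rw [← this]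
    simp only [RCLike.star_def]
    ring
  rw [this]
  exact Complex.ofReal_re _

/-- Combined operator monotonicity and Jensen inequality -/
def G (n : ℕ) (f : ℝ → ℝ) : Prop :=
  ∀ (X₁ X₂ Y V₁ V₂ : Matrix (Fin n) (Fin n) ℂ), X₁.PosDef → X₂.PosDef → Y.PosDef →
    V₁ᴴ * V₁ + V₂ᴴ * V₂ = 1 → V₁ᴴ * X₁ * V₁ + V₂ᴴ * X₂ * V₂ ≤ Y →
    V₁ᴴ * cfc f X₁ * V₁ + V₂ᴴ * cfc f X₂ * V₂ ≤ cfc f Y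

lemma re_conj (V C : Matrix (Fin n) (Fin n) ℂ) (v : Fin n → ℂ) :
    star v ⬝ᵥ ((Vᴴ * C * V) *ᵥ v) = star (V *ᵥ v) ⬝ᵥ (C *ᵥ (V *ᵥ v)) := by
  rw [← Matrix.mulVec_mulVec, ← Matrix.mulVec_mulVec, Matrix.dotProduct_mulVec, Matrix.star_mulVec]

lemma le_iff_q (f : ℝ → ℝ) (X₁ X₂ Y V₁ V₂ : Matrix (Fin n) (Fin n) ℂ) :
    V₁ᴴ * cfc f X₁ * V₁ + V₂ᴴ * cfc f X₂ * V₂ ≤ cfc f Y ↔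
    ∀ v, q f X₁ (V₁ *ᵥ v) + q f X₂ (V₂ *ᵥ v) ≤ q f Y v := by
  have hH : (cfc f Y - (V₁ᴴ * cfc f X₁ * V₁ + V₂ᴴ * cfc f X₂ * V₂)).IsHermitian :=
    (cfc_herm f Y).sub ((Matrix.isHermitian_conjTranspose_mul_mul _ (cfc_herm f X₁)).add
      (Matrix.isHermitian_conjTranspose_mul_mul _ (cfc_herm f X₂)))
  have key : ∀ v, RCLike.re (star v ⬝ᵥ
      ((cfc f Y - (V₁ᴴ * cfc f X₁ * V₁ + V₂ᴴ * cfc f X₂ * V₂)) *ᵥ v))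
      = q f Y v - (q f X₁ (V₁ *ᵥ v) + q f X₂ (V₂ *ᵥ v)) := by
    intro v
    simp only [q, Matrix.sub_mulVec, Matrix.add_mulVec, dotProduct_sub, dotProduct_add, re_conj,
      map_sub, map_add]
  rw [Matrix.le_iff]
  constructor
  · intro h v
    have := h.re_dotProduct_nonneg v
    rw [key] at this
    linarith
  · intro h
    refine Matrix.PosSemidef.of_dotProduct_mulVec_nonneg hH fun v => ?_
    rw [RCLike.nonneg_iff]
    refine ⟨?_, hH.im_star_dotProduct_mulVec_self v⟩
    rw [key]
    linarith [h v]

/-- scalar reformulation -/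
lemma G_of_scalar (f : ℝ → ℝ)
    (H : ∀ (m : ℕ) (x w : Fin m → ℝ), (∀ i, 0 < x i) →
      (∀ (g : ℝ → ℝ), G n g → 0 ≤ ∑ i, g (x i) * w i) → 0 ≤ ∑ i, f (x i) * w i) : G n f := by
  intro X₁ X₂ Y V₁ V₂ h₁ h₂ hY hV hle
  rw [le_iff_q]
  intro v
  obtain ⟨w₁, hw₁⟩ := q_eq h₁.1 (V₁ *ᵥ v)
  obtain ⟨w₂, hw₂⟩ := q_eq h₂.1 (V₂ *ᵥ v)
  obtain ⟨w, hw⟩ := q_eq hY.1 v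
  let x : Fin (n + (n + n)) → ℝ := Fin.append hY.1.eigenvalues
    (Fin.append h₁.1.eigenvalues h₂.1.eigenvalues)
  let W : Fin (n + (n + n)) → ℝ := Fin.append w (Fin.append (-w₁) (-w₂))
  have hs : ∀ g : ℝ → ℝ, ∑ i, g (x i) * W i
      = q g Y v - (q g X₁ (V₁ *ᵥ v) + q g X₂ (V₂ *ᵥ v)) := by
    intro g
    rw [Fin.sum_univ_add, Fin.sum_univ_add, hw₁, hw₂, hw]
    simp only [x, W, Fin.append_left, Fin.append_right, Pi.neg_apply, mul_neg,
      Finset.sum_neg_distrib]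
    ring
  have := H _ x W ?_ ?_
  · rw [hs] at this; linarith
  · intro i
    refine Fin.addCases (fun i => ?_) (fun i => ?_) i
    · simpa [x] using hY.eigenvalues_pos i
    · refine Fin.addCases (fun i => ?_) (fun i => ?_) i
      · simpa [x] using h₁.eigenvalues_pos i
      · simpa only [x, Fin.append_right] using h₂.eigenvalues_pos i
  · intro g hg
    rw [hs]
    have := (le_iff_q g X₁ X₂ Y V₁ V₂).1 (hg X₁ X₂ Y V₁ V₂ h₁ h₂ hY hV hle) v
    linarith

lemma G_const (c : ℝ) : G n (fun _ => c) := by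
  intro X₁ X₂ Y V₁ V₂ h₁ h₂ hY hV hle
  rw [cfc_const c _ h₁.1.isSelfAdjoint, cfc_const c _ h₂.1.isSelfAdjoint, cfc_const c _ hY.1.isSelfAdjoint]
  simp only [Algebra.algebraMap_eq_smul_one, mul_smul_comm, smul_mul_assoc, mul_one]
  rw [← smul_add, hV]

lemma G_id : G n (fun x => x) := by
  intro X₁ X₂ Y V₁ V₂ h₁ h₂ hY hV hle
  have e : ∀ X : Matrix (Fin n) (Fin n) ℂ, X.PosDef → cfc (fun x : ℝ => x) X = X :=
    fun X h => cfc_id' ℝ X h.1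
  rwa [e _ h₁, e _ h₂, e _ hY]

lemma G_comb {f g : ℝ → ℝ} (hf : G n f) (hg : G n g) {a b : ℝ} (ha : 0 ≤ a) (hb : 0 ≤ b) :
    G n (fun x => a * f x + b * g x) := by
  refine G_of_scalar _ fun m x w hx H => ?_
  have h1 := mul_nonneg ha (H f hf)
  have h2 := mul_nonneg hb (H g hg)
  have : ∑ i, (a * f (x i) + b * g (x i)) * w i
      = a * ∑ i, f (x i) * w i + b * ∑ i, g (x i) * w i := by
    rw [Finset.mul_sum, Finset.mul_sum, ← Finset.sum_add_distrib]
    exact Finset.sum_congr rfl fun i _ => by ring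
  rw [this]; positivity

lemma G_congr {f g : ℝ → ℝ} (hf : G n f) (h : ∀ x, 0 < x → g x = f x) : G n g := by
  refine G_of_scalar _ fun m x w hx H => ?_
  simp only [h _ (hx _)]
  exact H f hf

lemma G_lim {F : ℕ → ℝ → ℝ} {f : ℝ → ℝ} (hF : ∀ᶠ k in atTop, G n (F k))
    (h : ∀ x, 0 < x → Tendsto (fun k => F k x) atTop (𝓝 (f x))) : G n f := by
  refine G_of_scalar _ fun m x w hx H => ?_
  refine ge_of_tendsto (tendsto_finsetSum _ fun i _ => (h _ (hx i)).mul_const (w i)) ?_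
  filter_upwards [hF] with k hk
  exact H _ hk

lemma G_integral {F : ℝ → ℝ → ℝ} {f : ℝ → ℝ} (hF : ∀ t, 0 < t → G n (F t))
    (hi : ∀ x, 0 < x → IntegrableOn (fun t => F t x) (Set.Ioi 0))
    (h : ∀ x, 0 < x → f x = ∫ t in Set.Ioi 0, F t x) : G n f := by
  refine G_of_scalar _ fun m x w hx H => ?_
  have : ∑ i, f (x i) * w i = ∫ t in Set.Ioi (0:ℝ), ∑ i, F t (x i) * w i := by
    rw [integral_finsetSum _ fun i _ => (hi _ (hx i)).mul_const (w i)]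
    refine Finset.sum_congr rfl fun i _ => ?_
    rw [h _ (hx i), integral_mul_const]
  rw [this]
  exact setIntegral_nonneg measurableSet_Ioi fun t ht => H _ (hF t ht)

lemma G_comp {f g : ℝ → ℝ} (hf : G n f) (hg : G n g) (hpos : ∀ x, 0 < x → 0 < g x) :
    G n (fun x => f (g x)) := by
  intro X₁ X₂ Y V₁ V₂ h₁ h₂ hY hV hle
  have e : ∀ X : Matrix (Fin n) (Fin n) ℂ, X.PosDef →
      cfc (fun x => f (g x)) X = cfc f (cfc g X) := fun X hX =>
    cfc_comp' f g X ((Matrix.finite_real_spectrum.image g).continuousOn f) (contOn X g) hX.1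
  rw [e _ h₁, e _ h₂, e _ hY]
  exact hf _ _ _ _ _ (cfc_posDef hpos h₁) (cfc_posDef hpos h₂) (cfc_posDef hpos hY) hV
    (hg _ _ _ _ _ h₁ h₂ hY hV hle)

lemma cfc_resolvent {X : Matrix (Fin n) (Fin n) ℂ} (hX : X.PosDef) {t : ℝ} (ht : 0 < t) :
    (X + t • 1) * cfc (fun x : ℝ => (t + x)⁻¹) X = 1 := by
  have e : X + t • 1 = cfc (fun x : ℝ => x + t) X := by
    rw [cfc_add_const t (fun x => x) X (contOn X _) hX.1.isSelfAdjoint, cfc_id' ℝ X hX.1.isSelfAdjoint,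
      Algebra.algebraMap_eq_smul_one]
  rw [e, ← cfc_mul _ _ X (contOn X _) (contOn X _), ← cfc_const_one ℝ X hX.1.isSelfAdjoint]
  refine cfc_congr fun x hx => ?_
  have := spec_pos hX hx
  rw [add_comm t x]
  exact mul_inv_cancel₀ (by positivity)

lemma G_resolvent {t : ℝ} (ht : 0 < t) : G n (fun x => -(t + x)⁻¹) := by
  intro X₁ X₂ Y V₁ V₂ h₁ h₂ hY hV hle
  rw [cfc_neg, cfc_neg, cfc_neg]
  have r₁ := cfc_resolvent h₁ ht
  have r₂ := cfc_resolvent h₂ ht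
  have r := cfc_resolvent hY ht
  have hp : ∀ x : ℝ, 0 < x → 0 < (t + x)⁻¹ := fun x hx => by positivity
  have p₁ := cfc_posDef hp h₁
  have p₂ := cfc_posDef hp h₂
  have p := cfc_posDef hp hY
  set R₁ := cfc (fun x : ℝ => (t + x)⁻¹) X₁
  set R₂ := cfc (fun x : ℝ => (t + x)⁻¹) X₂
  set Z := cfc (fun x : ℝ => (t + x)⁻¹) Y
  set T₁ := X₁ + t • (1 : Matrix (Fin n) (Fin n) ℂ) with hT₁
  set T₂ := X₂ + t • (1 : Matrix (Fin n) (Fin n) ℂ) with hT₂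
  set S := Y + t • (1 : Matrix (Fin n) (Fin n) ℂ) with hS
  have l₁ : R₁ * T₁ = 1 := mul_eq_one_comm.1 r₁
  have l₂ : R₂ * T₂ = 1 := mul_eq_one_comm.1 r₂
  have l : Z * S = 1 := mul_eq_one_comm.1 r
  have hle' : (S - (V₁ᴴ * T₁ * V₁ + V₂ᴴ * T₂ * V₂)).PosSemidef := by
    have : S - (V₁ᴴ * T₁ * V₁ + V₂ᴴ * T₂ * V₂)
      = Y - (V₁ᴴ * X₁ * V₁ + V₂ᴴ * X₂ * V₂) := by
      have : V₁ᴴ * T₁ * V₁ + V₂ᴴ * T₂ * V₂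
        = V₁ᴴ * X₁ * V₁ + V₂ᴴ * X₂ * V₂ + t • (V₁ᴴ * V₁ + V₂ᴴ * V₂) := by
        simp only [hT₁, hT₂, mul_add, add_mul, mul_smul_comm, smul_mul_assoc, mul_one, smul_add]
        abel
      rw [this, hV, hS]; abel
    rw [this]; exact hle
  have hZ : Zᴴ = Z := p.1
  have hR₁ : R₁ᴴ = R₁ := p₁.1
  have hR₂ : R₂ᴴ = R₂ := p₂.1
  have hTT₁ : T₁ᴴ = T₁ := by simp [hT₁, h₁.1.eq]
  have hTT₂ : T₂ᴴ = T₂ := by simp [hT₂, h₂.1.eq]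
  have s₁ := p₁.posSemidef.conjTranspose_mul_mul_same (V₁ - T₁ * V₁ * Z)
  have s₂ := p₂.posSemidef.conjTranspose_mul_mul_same (V₂ - T₂ * V₂ * Z)
  have s₃ := hle'.conjTranspose_mul_mul_same Z
  have e : ∀ V T R : Matrix (Fin n) (Fin n) ℂ, Tᴴ = T → T * R = 1 → R * T = 1 →
      (V - T * V * Z)ᴴ * R * (V - T * V * Z)
       = Vᴴ * R * V - Vᴴ * V * Z - Z * (Vᴴ * V) + Z * (Vᴴ * T * V) * Z := by
    intro V T R hT h1 h2
    have a1 : R * (T * V * Z) = V * Z := by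
      rw [← mul_assoc, ← mul_assoc, h2, one_mul]
    have : R * (V - T * V * Z) = R * V - V * Z := by rw [mul_sub, a1]
    rw [mul_assoc, this, Matrix.conjTranspose_sub, Matrix.conjTranspose_mul,
      Matrix.conjTranspose_mul, hT, hZ]
    have a2 : Z * (Vᴴ * T) * (R * V) = Z * (Vᴴ * V) := by
      rw [mul_assoc, mul_assoc, ← mul_assoc T, h1, one_mul]
    rw [sub_mul, mul_sub, mul_sub, a2]
    noncomm_ring
  have tot := (s₁.add s₂).add s₃
  rw [e V₁ T₁ R₁ hTT₁ r₁ l₁, e V₂ T₂ R₂ hTT₂ r₂ l₂, hZ] at tot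
  rw [Matrix.le_iff]
  have hV2 : V₂ᴴ * V₂ = 1 - V₁ᴴ * V₁ := by rw [← hV]; abel
  have : Z * (S - (V₁ᴴ * T₁ * V₁ + V₂ᴴ * T₂ * V₂)) * Z
     = Z - Z * (V₁ᴴ * T₁ * V₁) * Z - Z * (V₂ᴴ * T₂ * V₂) * Z := by
    rw [mul_sub, l, sub_mul, one_mul, mul_add, add_mul]; abel
  rw [this, hV2] at tot
  have fin : -Z - (V₁ᴴ * -R₁ * V₁ + V₂ᴴ * -R₂ * V₂) =
      V₁ᴴ * R₁ * V₁ - V₁ᴴ * V₁ * Z - Z * (V₁ᴴ * V₁) + Z * (V₁ᴴ * T₁ * V₁) * Z +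
        (V₂ᴴ * R₂ * V₂ - (1 - V₁ᴴ * V₁) * Z - Z * (1 - V₁ᴴ * V₁) + Z * (V₂ᴴ * T₂ * V₂) * Z) +
      (Z - Z * (V₁ᴴ * T₁ * V₁) * Z - Z * (V₂ᴴ * T₂ * V₂) * Z) := by
    noncomm_ring
  rw [fin]
  exact tot

lemma G_rpow {r : ℝ} (h0 : 0 ≤ r) (h1 : r < 1) : G n (fun x => x ^ r) := by
  rcases h0.eq_or_lt with rfl | h0
  · simpa using G_const (n := n) 1
  have hr : r ∈ Set.Ioo (0:ℝ) 1 := ⟨h0, h1⟩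
  have hI : G n (fun x => ∫ t in Set.Ioi 0, Real.rpowIntegrand₀₁ r t x) := by
    refine G_integral (F := fun t x => Real.rpowIntegrand₀₁ r t x) (fun t ht => ?_)
      (fun x hx => Real.integrableOn_rpowIntegrand₀₁_Ioi hr hx.le) (fun _ _ => rfl)
    refine G_congr (G_comb (G_resolvent ht) (G_const t⁻¹) (a := t ^ r) (b := t ^ r)
      (by positivity) (by positivity)) fun x hx => ?_
    simp only [Real.rpowIntegrand₀₁]; ring
  refine G_congr (G_comb hI (G_const 0) (b := 0)
    (inv_nonneg.2 (Real.integral_rpowIntegrand₀₁_one_pos hr).le) le_rfl) fun x hx => ?_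
  rw [Real.rpow_eq_const_mul_integral hr hx.le]; ring

/-- Euler step for the flow with generator (x^{1-p} - x) over p -/
noncomputable def step (p e x : ℝ) : ℝ := (1 - e / p) * x + (e / p) * x ^ (1 - p)

lemma rpow_lower {p u : ℝ} (hp0 : 0 < p) (hp1 : p ≤ 1) (hu : -(1 / 2) ≤ u) :
    1 + p * u - u ^ 2 ≤ (1 + u) ^ p := by
  have h1 : (0:ℝ) < 1 + u := by linarith
  have h2 : (1 + u) ^ (1 - p) ≤ 1 + (1 - p) * u :=
    rpow_one_add_le_one_add_mul_self (by linarith) (by linarith) (by linarith)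
  have h3 : (1 + u) ^ p * (1 + u) ^ (1 - p) = 1 + u := by
    rw [← Real.rpow_add h1]; simp
  have h4 : (0:ℝ) < (1 + u) ^ p := by positivity
  have h5 : 1 / 2 ≤ 1 + (1 - p) * u := by nlinarith
  have h6 : 1 + u ≤ (1 + u) ^ p * (1 + (1 - p) * u) := by
    calc 1 + u = (1 + u) ^ p * (1 + u) ^ (1 - p) := h3.symm
      _ ≤ _ := by gcongr
  by_contra hcon
  push Not at hcon
  have h7 : (1 + u) ^ p * (1 + (1 - p) * u) < (1 + p * u - u ^ 2) * (1 + (1 - p) * u) :=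
    mul_lt_mul_of_pos_right hcon (by linarith)
  have h8 : p * (1 - p) ≤ 1 / 4 := by nlinarith [sq_nonneg (p - 1 / 2)]
  have h9 : (1 + p * u - u ^ 2) * (1 + (1 - p) * u)
      = 1 + u - u ^ 2 * ((1 + (1 - p) * u) - p * (1 - p)) := by ring
  have h10 : 0 ≤ u ^ 2 * ((1 + (1 - p) * u) - p * (1 - p)) :=
    mul_nonneg (sq_nonneg u) (by linarith)
  linarith

lemma step_bounds {p e x m M : ℝ} (hp0 : 0 < p) (hp1 : p ≤ 1) (he0 : 0 ≤ e) (he : e ≤ p)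
    (hm : 0 < m) (hm1 : m ≤ 1) (hM : 1 ≤ M) (hx : m ≤ x) (hx' : x ≤ M) :
    m ≤ step p e x ∧ step p e x ≤ M := by
  have hx0 : 0 < x := by linarith
  have a1 : 0 ≤ e / p := by positivity
  have a2 : e / p ≤ 1 := (div_le_one hp0).2 he
  have l1 : m ≤ x ^ (1 - p) := by
    calc m = m ^ (1:ℝ) := (Real.rpow_one m).symm
      _ ≤ m ^ (1 - p) := Real.rpow_le_rpow_of_exponent_ge hm hm1 (by linarith)
      _ ≤ x ^ (1 - p) := Real.rpow_le_rpow hm.le hx (by linarith)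
  have l2 : x ^ (1 - p) ≤ M := by
    calc x ^ (1 - p) ≤ M ^ (1 - p) := Real.rpow_le_rpow hx0.le hx' (by linarith)
      _ ≤ M ^ (1:ℝ) := Real.rpow_le_rpow_of_exponent_le hM (by linarith)
      _ = M := Real.rpow_one M
  unfold step
  constructor <;> nlinarith

lemma step_pow {p e x m M : ℝ} (hp0 : 0 < p) (hp1 : p ≤ 1) (he0 : 0 ≤ e) (he : e ≤ p / 2)
    (hm : 0 < m) (hx : m ≤ x) (hx' : x ≤ M) :
    (step p e x) ^ p - 1 ≤ (1 - e) * (x ^ p - 1) ∧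
    (1 - e) * (x ^ p - 1) - (M ^ p * (m ^ (-p) + 1) ^ 2 / p ^ 2) * e ^ 2
      ≤ (step p e x) ^ p - 1 := by
  have hx0 : 0 < x := by linarith
  have hM0 : 0 < M := by linarith
  set u := (e / p) * (x ^ (-p) - 1) with hu
  have hxp : 0 < x ^ (-p) := by positivity
  have a1 : 0 ≤ e / p := by positivity
  have a2 : e / p ≤ 1 / 2 := by rw [div_le_iff₀ hp0]; linarith
  have hu1 : -(1 / 2) ≤ u := by rw [hu]; nlinarith [mul_nonneg a1 hxp.le]
  have hs : step p e x = x * (1 + u) := by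
    have : x ^ (1 - p) = x * x ^ (-p) := by
      rw [sub_eq_add_neg, Real.rpow_add hx0, Real.rpow_one]
    rw [step, this, hu]; ring
  have hsp : (step p e x) ^ p = x ^ p * (1 + u) ^ p := by
    rw [hs, Real.mul_rpow hx0.le (by linarith)]
  have hy : 0 < x ^ p := by positivity
  have hyy : x ^ p * x ^ (-p) = 1 := by rw [← Real.rpow_add hx0]; simp
  have hyu : x ^ p * (1 + p * u) - 1 = (1 - e) * (x ^ p - 1) := by
    have : p * u = e * (x ^ (-p) - 1) := by rw [hu]; field_simp
    rw [this]
    linear_combination e * hyy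
  have up : (1 + u) ^ p ≤ 1 + p * u :=
    rpow_one_add_le_one_add_mul_self (by linarith) hp0.le hp1
  have lo := rpow_lower hp0 hp1 hu1
  have b1 := mul_le_mul_of_nonneg_left up hy.le
  have b2 := mul_le_mul_of_nonneg_left lo hy.le
  rw [hsp]
  refine ⟨by linarith, ?_⟩
  have hK : x ^ (-p) ≤ m ^ (-p) := Real.rpow_le_rpow_of_nonpos hm hx (by linarith)
  have hY : x ^ p ≤ M ^ p := Real.rpow_le_rpow hx0.le hx' hp0.le
  have hsq : (x ^ (-p) - 1) ^ 2 ≤ (m ^ (-p) + 1) ^ 2 := by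
    apply sq_le_sq'
    · linarith
    · linarith
  have : x ^ p * u ^ 2 ≤ (M ^ p * (m ^ (-p) + 1) ^ 2 / p ^ 2) * e ^ 2 := by
    calc x ^ p * u ^ 2 = x ^ p * (x ^ (-p) - 1) ^ 2 * (e / p) ^ 2 := by rw [hu]; ring
      _ ≤ M ^ p * (m ^ (-p) + 1) ^ 2 * (e / p) ^ 2 := by gcongr
      _ = _ := by ring
  nlinarith

lemma iter_bound {p e x m M : ℝ} (hp0 : 0 < p) (hp1 : p ≤ 1) (he0 : 0 ≤ e) (he : e ≤ p / 2)
    (hm : 0 < m) (hm1 : m ≤ 1) (hM : 1 ≤ M) (hx : m ≤ x) (hx' : x ≤ M) (k : ℕ) :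
    (m ≤ (step p e)^[k] x ∧ (step p e)^[k] x ≤ M) ∧
    ((step p e)^[k] x) ^ p - 1 ≤ (1 - e) ^ k * (x ^ p - 1) ∧
    (1 - e) ^ k * (x ^ p - 1) - k * ((M ^ p * (m ^ (-p) + 1) ^ 2 / p ^ 2) * e ^ 2)
      ≤ ((step p e)^[k] x) ^ p - 1 := by
  induction k with
  | zero => simp [hx, hx']
  | succ k ih =>
    obtain ⟨⟨i1, i2⟩, i3, i4⟩ := ih
    rw [Function.iterate_succ_apply']
    set z := (step p e)^[k] x
    refine ⟨step_bounds hp0 hp1 he0 (by linarith) hm hm1 hM i1 i2, ?_⟩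
    obtain ⟨j1, j2⟩ := step_pow hp0 hp1 he0 he hm i1 i2
    have hC : 0 ≤ (M ^ p * (m ^ (-p) + 1) ^ 2 / p ^ 2) * e ^ 2 := by
      have : 0 < M := by linarith
      positivity
    set D := (M ^ p * (m ^ (-p) + 1) ^ 2 / p ^ 2) * e ^ 2
    have e1 : 0 ≤ 1 - e := by linarith
    have k1 := mul_le_mul_of_nonneg_left i3 e1
    have k2 := mul_le_mul_of_nonneg_left i4 e1
    have k3 : 0 ≤ e * (k * D) := by positivity
    rw [pow_succ]
    push_cast
    constructor <;> nlinarith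

lemma iter_tendsto {p s x : ℝ} (hp0 : 0 < p) (hp1 : p ≤ 1) (hs : 0 ≤ s) (hx : 0 < x) :
    Tendsto (fun N : ℕ => (step p (s / N))^[N] x) atTop
      (𝓝 ((Real.exp (-s) * (x ^ p - 1) + 1) ^ (1 / p))) := by
  set m := min x 1
  set M := max x 1
  have hm : 0 < m := lt_min hx one_pos
  set C := M ^ p * (m ^ (-p) + 1) ^ 2 / p ^ 2 with hC
  have hsm : ∀ᶠ N : ℕ in atTop, s / N ≤ p / 2 := by
    have : Tendsto (fun N : ℕ => s / (N : ℝ)) atTop (𝓝 0) := tendsto_const_div_atTop_nhds_zero_nat s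
    filter_upwards [this.eventually (gt_mem_nhds (by positivity : (0:ℝ) < p / 2))] with N hN
    exact hN.le
  have hb : ∀ᶠ N : ℕ in atTop, _ := hsm.mono fun N hN =>
    iter_bound (x := x) (m := m) (M := M) hp0 hp1 (by positivity : 0 ≤ s / N) hN hm
      (min_le_right _ _) (le_max_right _ _) (min_le_left _ _) (le_max_left _ _) N
  have hpow : Tendsto (fun N : ℕ => (1 - s / (N:ℝ)) ^ N) atTop (𝓝 (Real.exp (-s))) := by
    have := Real.tendsto_one_add_div_pow_exp (-s)
    refine this.congr fun N => ?_
    rw [neg_div, ← sub_eq_add_neg]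
  have hup := (hpow.mul_const (x ^ p - 1)).add_const 1
  have herr : Tendsto (fun N : ℕ => (N:ℝ) * (C * (s / N) ^ 2)) atTop (𝓝 0) := by
    have : Tendsto (fun N : ℕ => (C * s ^ 2) / (N : ℝ)) atTop (𝓝 0) :=
      tendsto_const_div_atTop_nhds_zero_nat _
    refine this.congr' ?_
    filter_upwards [eventually_gt_atTop 0] with N hN
    have : (N:ℝ) ≠ 0 := by positivity
    field_simp
  have hlo := ((hpow.mul_const (x ^ p - 1)).sub herr).add_const 1
  rw [sub_zero] at hlo
  have hy : Tendsto (fun N : ℕ => ((step p (s / N))^[N] x) ^ p) atTop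
      (𝓝 (Real.exp (-s) * (x ^ p - 1) + 1)) := by
    refine tendsto_of_tendsto_of_tendsto_of_le_of_le' hlo hup ?_ ?_
    · filter_upwards [hb] with N hN
      linarith [hN.2.2]
    · filter_upwards [hb] with N hN
      linarith [hN.2.1]
  have hfin := hy.rpow_const (p := 1 / p) (Or.inr (by positivity))
  refine hfin.congr' ?_
  filter_upwards [hb] with N hN
  have h0 : 0 ≤ (step p (s / N))^[N] x := by linarith [hN.1.1]
  rw [one_div, Real.rpow_rpow_inv h0 hp0.ne']

lemma step_pos {p e x : ℝ} (hp0 : 0 < p) (he0 : 0 ≤ e) (he : e ≤ p / 2) (hx : 0 < x) :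
    0 < step p e x := by
  have a1 : 0 ≤ e / p := by positivity
  have a2 : e / p ≤ 1 / 2 := by rw [div_le_iff₀ hp0]; linarith
  have h : 0 < x ^ (1 - p) := by positivity
  unfold step
  nlinarith [mul_nonneg a1 h.le]

lemma G_iter {p e : ℝ} (hp0 : 0 < p) (hp1 : p ≤ 1) (he0 : 0 ≤ e) (he : e ≤ p / 2) (k : ℕ) :
    G n (fun x => (step p e)^[k] x) ∧ ∀ x, 0 < x → 0 < (step p e)^[k] x := by
  have a1 : 0 ≤ e / p := by positivity
  have a2 : e / p ≤ 1 / 2 := by rw [div_le_iff₀ hp0]; linarith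
  have hs : G n (step p e) :=
    G_comb G_id (G_rpow (by linarith) (by linarith)) (by linarith) a1
  induction k with
  | zero => exact ⟨G_id, fun x hx => hx⟩
  | succ k ih =>
    simp only [Function.iterate_succ_apply']
    exact ⟨G_comp hs ih.1 ih.2, fun x hx => step_pos hp0 he0 he (ih.2 x hx)⟩

/-- the power mean function -/
noncomputable def pm (lam p x : ℝ) : ℝ := (lam * x ^ p + (1 - lam)) ^ (1 / p)

lemma G_pm {p lam : ℝ} (hp0 : 0 < p) (hp1 : p ≤ 1) (hl0 : 0 ≤ lam) (hl1 : lam ≤ 1) :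
    G n (pm lam p) := by
  rcases hl0.eq_or_lt with rfl | hl0
  · refine G_congr (G_const 1) fun x hx => ?_
    simp [pm]
  have hs : 0 ≤ -Real.log lam := by
    have := Real.log_nonpos hl0.le hl1
    linarith
  refine G_lim (F := fun N x => (step p (-Real.log lam / N))^[N] x) ?_ fun x hx => ?_
  · have : Tendsto (fun N : ℕ => -Real.log lam / (N : ℝ)) atTop (𝓝 0) :=
      tendsto_const_div_atTop_nhds_zero_nat _
    filter_upwards [this.eventually (gt_mem_nhds (by positivity : (0:ℝ) < p / 2))] with N hN
    exact (G_iter hp0 hp1 (by positivity) hN.le N).1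
  · have := iter_tendsto hp0 hp1 hs hx
    rw [neg_neg, Real.exp_log hl0] at this
    have e : pm lam p x = (lam * (x ^ p - 1) + 1) ^ (1 / p) := by
      unfold pm; congr 1; ring
    rwa [e]

lemma mpow_half {B : Matrix (Fin n) (Fin n) ℂ} (hB : B.PosDef) :
    (mpow B (1 / 2))ᴴ = mpow B (1 / 2) ∧ (mpow B (-(1 / 2)))ᴴ = mpow B (-(1 / 2)) ∧
    mpow B (1 / 2) * mpow B (1 / 2) = B ∧ mpow B (1 / 2) * mpow B (-(1 / 2)) = 1 ∧
    mpow B (-(1 / 2)) * mpow B (1 / 2) = 1 := by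
  have h4 : mpow B (1 / 2) * mpow B (-(1 / 2)) = 1 := by
    rw [mpow_eq hB.1, mpow_eq hB.1, ← cfc_mul _ _ B (contOn B _) (contOn B _),
      ← cfc_const_one ℝ B hB.1.isSelfAdjoint]
    refine cfc_congr fun x hx => ?_
    have := spec_pos hB hx
    simp only [← Real.rpow_add this]
    simp
  refine ⟨?_, ?_, ?_, h4, mul_eq_one_comm.1 h4⟩
  · rw [mpow_eq hB.1]; exact cfc_herm _ _
  · rw [mpow_eq hB.1]; exact cfc_herm _ _
  · rw [mpow_eq hB.1, ← cfc_mul _ _ B (contOn B _) (contOn B _)]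
    conv_rhs => rw [← cfc_id' ℝ B hB.1.isSelfAdjoint]
    refine cfc_congr fun x hx => ?_
    have := spec_pos hB hx
    simp only [← Real.rpow_add this]
    norm_num

lemma TAT_posDef {A B : Matrix (Fin n) (Fin n) ℂ} (hA : A.PosDef) (hB : B.PosDef) :
    (mpow B (-(1 / 2)) * A * mpow B (-(1 / 2))).PosDef := by
  obtain ⟨-, h2, -, h4, h5⟩ := mpow_half hB
  have hu : IsUnit (mpow B (-(1 / 2))) := IsUnit.of_mul_eq_one _ h5
  have := hA.conjTranspose_mul_mul_same (Matrix.mulVec_injective_of_isUnit hu)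
  rwa [h2] at this

lemma persp2_eq {A B : Matrix (Fin n) (Fin n) ℂ} (hA : A.PosDef) (hB : B.PosDef) (lam p : ℝ) :
    persp2 lam p A B = mpow B (1 / 2) *
      cfc (pm lam p) (mpow B (-(1 / 2)) * A * mpow B (-(1 / 2))) * mpow B (1 / 2) := by
  have hX := TAT_posDef hA hB
  unfold persp2
  set X := mpow B (-(1 / 2)) * A * mpow B (-(1 / 2))
  congr 2
  have e : lam • mpow X p + (1 - lam) • 1 = cfc (fun x : ℝ => lam * x ^ p + (1 - lam)) X := by
    rw [cfc_add_const (1 - lam) (fun x : ℝ => lam * x ^ p) X (contOn X _) hX.1.isSelfAdjoint,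
      cfc_const_mul lam (fun x : ℝ => x ^ p) X (contOn X _), mpow_eq hX.1,
      Algebra.algebraMap_eq_smul_one]
  rw [e, mpow_eq (cfc_herm _ _)]
  exact (cfc_comp' (fun y : ℝ => y ^ (1 / p)) (fun x : ℝ => lam * x ^ p + (1 - lam)) X
    ((Matrix.finite_real_spectrum.image _).continuousOn _) (contOn X _)
    hX.1.isSelfAdjoint).symm

lemma posDef_conv {A₁ A₂ : Matrix (Fin n) (Fin n) ℂ} (h₁ : A₁.PosDef) (h₂ : A₂.PosDef)
    {α : ℝ} (hα0 : 0 ≤ α) (hα1 : α ≤ 1) : (α • A₁ + (1 - α) • A₂).PosDef := by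
  rcases hα0.eq_or_lt with rfl | h
  · simpa using h₂
  · exact (h₁.smul h).add_posSemidef (h₂.posSemidef.smul (by linarith))

theorem main {n : ℕ} (p lam : ℝ) (hp0 : 0 < p) (hp1 : p ≤ 1)
    (hl0 : 0 ≤ lam) (hl1 : lam ≤ 1)
    (A₁ A₂ B₁ B₂ : Matrix (Fin n) (Fin n) ℂ)
    (hA₁ : A₁.PosDef) (hA₂ : A₂.PosDef) (hB₁ : B₁.PosDef) (hB₂ : B₂.PosDef)
    (α : ℝ) (hα0 : 0 ≤ α) (hα1 : α ≤ 1) :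
    (persp2 lam p (α • A₁ + (1 - α) • A₂) (α • B₁ + (1 - α) • B₂) -
      (α • persp2 lam p A₁ B₁ + (1 - α) • persp2 lam p A₂ B₂)).PosSemidef := by
  have hA := posDef_conv hA₁ hA₂ hα0 hα1
  have hB := posDef_conv hB₁ hB₂ hα0 hα1
  rw [persp2_eq hA hB, persp2_eq hA₁ hB₁, persp2_eq hA₂ hB₂]
  obtain ⟨a1, a2, a3, a4, a5⟩ := mpow_half hB
  obtain ⟨b1, b2, b3, b4, b5⟩ := mpow_half hB₁
  obtain ⟨c1, c2, c3, c4, c5⟩ := mpow_half hB₂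
  have hX := TAT_posDef hA hB
  have hX₁ := TAT_posDef hA₁ hB₁
  have hX₂ := TAT_posDef hA₂ hB₂
  have hG := G_pm (n := n) hp0 hp1 hl0 hl1
  set f := pm lam p
  set A := α • A₁ + (1 - α) • A₂ with hAdef
  set B := α • B₁ + (1 - α) • B₂ with hBdef
  set S := mpow B (1 / 2)
  set T := mpow B (-(1 / 2))
  set S₁ := mpow B₁ (1 / 2)
  set T₁ := mpow B₁ (-(1 / 2))
  set S₂ := mpow B₂ (1 / 2)
  set T₂ := mpow B₂ (-(1 / 2))
  have conj : ∀ (β : ℝ) (R C : Matrix (Fin n) (Fin n) ℂ), 0 ≤ β → Rᴴ = R →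
      (Real.sqrt β • (R * T))ᴴ * C * (Real.sqrt β • (R * T)) = β • (T * (R * C * R) * T) := by
    intro β R C hβ hR
    rw [Matrix.conjTranspose_smul, Matrix.conjTranspose_mul, hR, a2, star_trivial,
      smul_mul_assoc, smul_mul_assoc, mul_smul_comm, smul_smul, Real.mul_self_sqrt hβ]
    simp only [mul_assoc]
  have hα' : 0 ≤ 1 - α := by linarith
  have k : ∀ R Q E : Matrix (Fin n) (Fin n) ℂ, R * Q = 1 → Q * R = 1 →
      R * (Q * E * Q) * R = E := by
    intro R Q E h1 h2
    calc R * (Q * E * Q) * R = (R * Q) * E * (Q * R) := by simp only [mul_assoc]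
      _ = E := by rw [h1, h2, one_mul, mul_one]
  have lin : ∀ L E F : Matrix (Fin n) (Fin n) ℂ,
      L * (α • E + (1 - α) • F) * L = α • (L * E * L) + (1 - α) • (L * F * L) := by
    intro L E F
    rw [mul_add, add_mul, mul_smul_comm, smul_mul_assoc, mul_smul_comm, smul_mul_assoc]
  have main := hG _ _ _ (Real.sqrt α • (S₁ * T)) (Real.sqrt (1 - α) • (S₂ * T)) hX₁ hX₂ hX ?_ ?_
  · rw [conj _ _ _ hα0 b1, conj _ _ _ hα' c1, Matrix.le_iff] at main
    have := main.conjTranspose_mul_mul_same S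
    rw [a1, mul_sub, sub_mul, lin S (T * _ * T), k S T _ a4 a5, k S T _ a4 a5] at this
    exact this
  · have h1 := conj α S₁ 1 hα0 b1
    have h2 := conj (1 - α) S₂ 1 hα' c1
    rw [mul_one, mul_one, b3] at h1
    rw [mul_one, mul_one, c3] at h2
    rw [h1, h2, ← lin, ← hBdef, ← a3, ← mul_assoc, a5, one_mul, a4]
  · rw [conj _ _ _ hα0 b1, conj _ _ _ hα' c1, k _ _ _ b4 b5, k _ _ _ c4 c5,
      ← lin, ← hAdef]

end PerspAux

theorem stmt15 {n : ℕ} (p lam : ℝ) (hp0 : 0 < p) (hp1 : p ≤ 1)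
    (hl0 : 0 ≤ lam) (hl1 : lam ≤ 1)
    (A₁ A₂ B₁ B₂ : Matrix (Fin n) (Fin n) ℂ)
    (hA₁ : A₁.PosDef) (hA₂ : A₂.PosDef) (hB₁ : B₁.PosDef) (hB₂ : B₂.PosDef)
    (α : ℝ) (hα0 : 0 ≤ α) (hα1 : α ≤ 1) :
    (persp2 lam p (α • A₁ + (1 - α) • A₂) (α • B₁ + (1 - α) • B₂) -
      (α • persp2 lam p A₁ B₁ + (1 - α) • persp2 lam p A₂ B₂)).PosSemidef :=
  PerspAux.main p lam hp0 hp1 hl0 hl1 A₁ A₂ B₁ B₂ hA₁ hA₂ hB₁ hB₂ α hα0 hα1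
end
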